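/- Let n ≥ 1 be an integer and δ ∈ (0, n]. There exist positive constants c and C, depending only on n and δ, such that for every f ∈ BLO(ℝⁿ, ℋ^δ_∞) with ‖f‖_{BLO(ℝⁿ,ℋ^δ_∞)} ≠ 0, every cube Q and every t > 0: ℋ^δ_∞({x ∈ Q : f(x) − essinf_{y∈Q} f(y) > t}) ≤ C · ℋ^δ_∞(Q) · exp(−c t / ‖f‖_{BLO(ℝⁿ,ℋ^δ_∞)}). -/

import Mathlib

open scoped ENNReal
open Set MeasureTheory

noncomputable section

/-- An axis-parallel cube in `ℝⁿ`, described by its lower corner and positive side length. -/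
structure Cube (n : ℕ) where
  corner : Fin n → ℝ
  side : ℝ
  side_pos : 0 < side

namespace Cube

/-- The half-open cube `∏ᵢ [cornerᵢ, cornerᵢ + side)` as a set of points. -/
def toSet {n : ℕ} (Q : Cube n) : Set (Fin n → ℝ) :=
  {x | ∀ i, Q.corner i ≤ x i ∧ x i < Q.corner i + Q.side}

/-- A cube is dyadic if it has the form `2^k·(z + [0,1)ⁿ)` with `k ∈ ℤ`, `z ∈ ℤⁿ`. -/
def IsDyadic {n : ℕ} (Q : Cube n) : Prop :=
  ∃ (k : ℤ) (z : Fin n → ℤ), Q.side = (2:ℝ) ^ k ∧ ∀ i, Q.corner i = (z i : ℝ) * (2:ℝ) ^ k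

/-- `Q'` is a dyadic subcube of `Q`, i.e. obtained from `Q` by repeated bisection. -/
def IsDyadicSubcube {n : ℕ} (Q' Q : Cube n) : Prop :=
  ∃ (k : ℕ) (z : Fin n → ℕ), (∀ i, z i < 2 ^ k) ∧
    Q'.side = Q.side / 2 ^ k ∧ ∀ i, Q'.corner i = Q.corner i + (z i : ℝ) * (Q.side / 2 ^ k)

/-- The concentric dilate `t·Q` of a cube. -/
def dilate {n : ℕ} (Q : Cube n) (t : ℝ) (ht : 0 < t) : Cube n :=
  ⟨fun i => Q.corner i + Q.side / 2 - t * Q.side / 2, t * Q.side, mul_pos ht Q.side_pos⟩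

end Cube

/-- The Hausdorff content `ℋ^δ_∞`. -/
def hContent (n : ℕ) (δ : ℝ) (E : Set (Fin n → ℝ)) : ℝ≥0∞ :=
  ⨅ (Qs : ℕ → Cube n) (_ : E ⊆ ⋃ i, (Qs i).toSet), ∑' i, ENNReal.ofReal ((Qs i).side ^ δ)

/-- The dyadic Hausdorff content `~ℋ^δ_∞`. -/
def dContent (n : ℕ) (δ : ℝ) (E : Set (Fin n → ℝ)) : ℝ≥0∞ :=
  ⨅ (Qs : ℕ → Cube n) (_ : (∀ i, (Qs i).IsDyadic) ∧ E ⊆ ⋃ i, (Qs i).toSet),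
    ∑' i, ENNReal.ofReal ((Qs i).side ^ δ)

/-- The Choquet integral `∫_E f dℋ^δ_∞`. -/
def integH (n : ℕ) (δ : ℝ) (f : (Fin n → ℝ) → ℝ) (E : Set (Fin n → ℝ)) : ℝ≥0∞ :=
  ∫⁻ t in Ioi (0:ℝ), hContent n δ {x | x ∈ E ∧ t < f x}

/-- The Choquet integral `∫_E f d~ℋ^δ_∞` w.r.t. the dyadic Hausdorff content. -/
def integD (n : ℕ) (δ : ℝ) (f : (Fin n → ℝ) → ℝ) (E : Set (Fin n → ℝ)) : ℝ≥0∞ :=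
  ∫⁻ t in Ioi (0:ℝ), dContent n δ {x | x ∈ E ∧ t < f x}

/-- A property holds `ℋ^δ_∞`-a.e. -/
def AEContent (n : ℕ) (δ : ℝ) (P : (Fin n → ℝ) → Prop) : Prop :=
  hContent n δ {x | ¬ P x} = 0

/-- `ℋ^δ_∞`-quasicontinuity. -/
def QuasiCont (n : ℕ) (δ : ℝ) (f : (Fin n → ℝ) → ℝ) : Prop :=
  ∀ ε : ℝ, 0 < ε → ∃ O : Set (Fin n → ℝ),
    IsOpen O ∧ hContent n δ O < ENNReal.ofReal ε ∧ ContinuousOn f Oᶜ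

/-- `L¹_loc(ℝⁿ, ℋ^δ_∞)`. -/
def MemL1loc (n : ℕ) (δ : ℝ) (f : (Fin n → ℝ) → ℝ) : Prop :=
  QuasiCont n δ f ∧ ∀ K : Set (Fin n → ℝ), IsCompact K → integH n δ (fun x => |f x|) K < ⊤

/-- `L^∞(ℝⁿ, ℋ^δ_∞)`. -/
def MemLinf (n : ℕ) (δ : ℝ) (f : (Fin n → ℝ) → ℝ) : Prop :=
  QuasiCont n δ f ∧ ∃ M : ℝ, AEContent n δ (fun x => |f x| ≤ M)

/-- The `BMO(ℝⁿ, ℋ^δ_∞)` seminorm. -/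
def bmoNorm (n : ℕ) (δ : ℝ) (f : (Fin n → ℝ) → ℝ) : ℝ≥0∞ :=
  ⨆ Q : Cube n, ⨅ c : ℝ,
    integH n δ (fun x => |f x - c|) Q.toSet / hContent n δ Q.toSet

/-- Membership in `BMO(ℝⁿ, ℋ^δ_∞)`. -/
def MemBMO (n : ℕ) (δ : ℝ) (f : (Fin n → ℝ) → ℝ) : Prop :=
  MemL1loc n δ f ∧ bmoNorm n δ f < ⊤

/-- `essinf_{x ∈ Q} f := inf {t ∈ (0,∞) : ℋ^δ_∞({x ∈ Q : f x < t}) > 0}`. -/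
def essInfQ (n : ℕ) (δ : ℝ) (f : (Fin n → ℝ) → ℝ) (Q : Cube n) : ℝ :=
  sInf {t : ℝ | 0 < t ∧ 0 < hContent n δ {x | x ∈ Q.toSet ∧ f x < t}}

/-- The `BLO(ℝⁿ, ℋ^δ_∞)` seminorm. -/
def bloNorm (n : ℕ) (δ : ℝ) (f : (Fin n → ℝ) → ℝ) : ℝ≥0∞ :=
  ⨆ Q : Cube n,
    integH n δ (fun x => |f x - essInfQ n δ f Q|) Q.toSet / hContent n δ Q.toSet

/-- Membership in `BLO(ℝⁿ, ℋ^δ_∞)`. -/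
def MemBLO (n : ℕ) (δ : ℝ) (f : (Fin n → ℝ) → ℝ) : Prop :=
  MemL1loc n δ f ∧ bloNorm n δ f < ⊤

/-- A weight: locally Choquet-integrable, quasicontinuous, positive `ℋ^δ_∞`-a.e. -/
def IsWeight (n : ℕ) (δ : ℝ) (w : (Fin n → ℝ) → ℝ) : Prop :=
  MemL1loc n δ w ∧ AEContent n δ (fun x => 0 < w x)

/-- The capacitary Muckenhoupt `A_{p,δ}` constant, for `p > 1`. -/
def apConst (n : ℕ) (δ p : ℝ) (w : (Fin n → ℝ) → ℝ) : ℝ≥0∞ :=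
  ⨆ Q : Cube n,
    (integH n δ w Q.toSet / hContent n δ Q.toSet) *
      (integH n δ (fun x => w x ^ (-(1 / (p - 1)))) Q.toSet / hContent n δ Q.toSet) ^ (p - 1)

/-- Membership in `A_{p,δ}`, `p > 1`. -/
def MemAp (n : ℕ) (δ p : ℝ) (w : (Fin n → ℝ) → ℝ) : Prop :=
  IsWeight n δ w ∧ apConst n δ p w < ⊤

/-- The Hardy–Littlewood maximal operator w.r.t. `ℋ^δ_∞`. -/
def maxOp (n : ℕ) (δ : ℝ) (g : (Fin n → ℝ) → ℝ) (x : Fin n → ℝ) : ℝ≥0∞ :=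
  ⨆ (Q : Cube n) (_ : x ∈ Q.toSet),
    integH n δ (fun y => |g y|) Q.toSet / hContent n δ Q.toSet

/-- The capacitary `A_{1,δ}` constant. -/
def a1Const (n : ℕ) (δ : ℝ) (w : (Fin n → ℝ) → ℝ) : ℝ≥0∞ :=
  sInf {c : ℝ≥0∞ | 0 < c ∧
    AEContent n δ (fun x => maxOp n δ w x ≤ c * ENNReal.ofReal (w x))}

/-- Membership in `A_{1,δ}`. -/
def MemA1 (n : ℕ) (δ : ℝ) (w : (Fin n → ℝ) → ℝ) : Prop :=
  IsWeight n δ w ∧ a1Const n δ w < ⊤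

/-- The `A_{p,δ}` constant for `p ∈ [1,∞)` (it is the `A_{1,δ}` constant when `p = 1`). -/
def apConstGen (n : ℕ) (δ p : ℝ) (w : (Fin n → ℝ) → ℝ) : ℝ≥0∞ :=
  if p = 1 then a1Const n δ w else apConst n δ p w

/-- Membership in `A_{p,δ}` for `p ∈ [1,∞)` (meaning `A_{1,δ}` when `p = 1`). -/
def MemApGen (n : ℕ) (δ p : ℝ) (w : (Fin n → ℝ) → ℝ) : Prop :=
  IsWeight n δ w ∧ apConstGen n δ p w < ⊤

/-- The weighted `BMO^q_w(ℝⁿ, ℋ^δ_∞)` seminorm. -/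
def bmoWNorm (n : ℕ) (δ q : ℝ) (w f : (Fin n → ℝ) → ℝ) : ℝ≥0∞ :=
  ⨆ Q : Cube n, ⨅ c : ℝ,
    (integH n δ (fun x => |f x - c| ^ q * w x) Q.toSet / integH n δ w Q.toSet) ^ (1 / q)

/-- Membership in `BMO^q_w(ℝⁿ, ℋ^δ_∞)`. -/
def MemBMOw (n : ℕ) (δ q : ℝ) (w f : (Fin n → ℝ) → ℝ) : Prop :=
  QuasiCont n δ f ∧
    (∀ K : Set (Fin n → ℝ), IsCompact K → integH n δ (fun x => |f x| ^ q * w x) K < ⊤) ∧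
    bmoWNorm n δ q w f < ⊤

/-- The integral average `f_{Q,δ}` with respect to the dyadic Hausdorff content. -/
def avgQ (n : ℕ) (δ : ℝ) (f : (Fin n → ℝ) → ℝ) (Q : Cube n) : ℝ :=
  ((integD n δ f (Q.toSet ∩ {x | 0 ≤ f x})).toReal -
      (integD n δ (fun x => -f x) (Q.toSet ∩ {x | f x < 0})).toReal) /
    ((dContent n δ (Q.toSet ∩ {x | 0 ≤ f x})).toReal +
      (dContent n δ (Q.toSet ∩ {x | f x < 0})).toReal)

/-!
The argument is a John–Nirenberg iteration in which a stopping time on content replaces the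
Calderón–Zygmund decomposition of a measure. Let `s` be a large constant, `b` the seminorm of `f`
and `E ⊆ Q` the set where `f` exceeds its essential infimum on `Q` by more than `s * b`. By
Chebyshev's inequality `E` is small, so it has a cover by dyadic subcubes of `Q` of total content
at most half that of `Q`. Replace the cover by the maximal dyadic cubes `R` whose content is at
most the total content of the members inside them; this does not increase the total. The parent `P`
of such an `R` is not of this kind, so `E` does not exhaust the content of `P`, and the essential
infimum of `f` on `P` exceeds that on `Q` by at most `s * b`. Since `P` is only twice as large as
`R`, the passage from `P` to `R` costs another `s * b`. Iterating in every `R`, the content halves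
each time the level rises by `2 * s * b`.
-/

/-! ### Dyadic subcubes -/

lemma exists_natFloor_eq_min {u w : ℝ} {N : ℕ} (hu : 0 ≤ u) (huN : u < N) (hwu : w ≤ u)
    (huw : u < w + 1) : ∃ b : Bool, ⌊u⌋₊ = min (⌊w⌋₊ + b.toNat) (N - 1) := by
  have hle := Nat.floor_le_floor hwu
  have hlt : ⌊u⌋₊ < ⌊w⌋₊ + 2 := by
    rw [Nat.floor_lt hu]
    push_cast
    linarith [Nat.lt_floor_add_one w]
  have hN : ⌊u⌋₊ < N := (Nat.floor_lt hu).2 huN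
  rcases hle.eq_or_lt with heq | hlt'
  · exact ⟨false, by simp only [Bool.toNat_false]; omega⟩
  · exact ⟨true, by simp only [Bool.toNat_true]; omega⟩

namespace Cube

variable {n : ℕ} {Q A B : Cube n} {x : Fin n → ℝ} {k : ℕ}

/-- The affine coordinates in which `Q` is the unit cube `[0,1)ⁿ`. -/
def coord (Q : Cube n) (x : Fin n → ℝ) (i : Fin n) : ℝ :=
  (x i - Q.corner i) / Q.side

/-- The cube which is `2⁻ᵏ • (z + [0,1)ⁿ)` in the coordinates of `Q`. It is a dyadic subcube of `Q`
when `z i < 2 ^ k` for all `i`. -/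
def subcube (Q : Cube n) (k : ℕ) (z : Fin n → ℕ) : Cube n where
  corner i := Q.corner i + z i * (Q.side / 2 ^ k)
  side := Q.side / 2 ^ k
  side_pos := div_pos Q.side_pos (by positivity)

lemma subcube_zero (Q : Cube n) : Q.subcube 0 0 = Q := by
  simp [subcube]

lemma isDyadicSubcube_iff_exists_subcube :
    A.IsDyadicSubcube Q ↔ ∃ k z, (∀ i, z i < 2 ^ k) ∧ A = Q.subcube k z := by
  refine exists₂_congr fun k z => and_congr_right fun _ => ?_
  cases A
  simp only [subcube, mk.injEq, funext_iff, and_comm]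

lemma corner_mem (Q : Cube n) : Q.corner ∈ Q.toSet :=
  fun _ => ⟨le_rfl, lt_add_of_pos_right _ Q.side_pos⟩

lemma mem_subcube_iff_floor {z : Fin n → ℕ} :
    x ∈ (Q.subcube k z).toSet ↔ ∀ i, ⌊2 ^ k * Q.coord x i⌋ = (z i : ℤ) := by
  have hcell : 0 < Q.side / 2 ^ k := (Q.subcube k z).side_pos
  have hscale (i : Fin n) : 2 ^ k * Q.coord x i = (x i - Q.corner i) / (Q.side / 2 ^ k) := by
    simp only [coord]
    field_simp
  refine forall_congr' fun i => ?_
  rw [Int.floor_eq_iff, hscale, le_div_iff₀ hcell, div_lt_iff₀ hcell, Int.cast_natCast]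
  simp only [subcube]
  constructor <;> rintro ⟨h₁, h₂⟩ <;> constructor <;> linarith

lemma mem_toSet_iff_coord : x ∈ Q.toSet ↔ ∀ i, 0 ≤ Q.coord x i ∧ Q.coord x i < 1 := by
  refine forall_congr' fun i => ?_
  rw [coord, le_div_iff₀ Q.side_pos, div_lt_one Q.side_pos]
  constructor <;> rintro ⟨h₁, h₂⟩ <;> constructor <;> linarith

lemma coord_sub_coord (Q : Cube n) (x y : Fin n → ℝ) (i : Fin n) :
    Q.coord x i - Q.coord y i = (x i - y i) / Q.side := by
  simp only [coord]
  ring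

lemma subcube_subset_subcube_div {j : ℕ} (hjk : j ≤ k) (z : Fin n → ℕ) :
    (Q.subcube k z).toSet ⊆ (Q.subcube j fun i => z i / 2 ^ (k - j)).toSet := by
  intro x hx
  rw [mem_subcube_iff_floor] at hx ⊢
  intro i
  have hpow : (2 : ℝ) ^ k = 2 ^ j * 2 ^ (k - j) := by rw [← pow_add, Nat.add_sub_cancel' hjk]
  have hscale : 2 ^ j * Q.coord x i = 2 ^ k * Q.coord x i / (2 ^ (k - j) : ℕ) := by
    push_cast
    rw [hpow]
    field_simp
  rw [hscale, Int.floor_div_natCast, hx i, Int.natCast_div]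

lemma eq_of_mem_subcube {z w : Fin n → ℕ} (hz : x ∈ (Q.subcube k z).toSet)
    (hw : x ∈ (Q.subcube k w).toSet) : z = w := by
  rw [mem_subcube_iff_floor] at hz hw
  exact funext fun i => by exact_mod_cast (hz i).symm.trans (hw i)

lemma countable_setOf_isDyadicSubcube (Q : Cube n) : {A : Cube n | A.IsDyadicSubcube Q}.Countable :=
  (countable_range fun c : ℕ × (Fin n → ℕ) => Q.subcube c.1 c.2).mono fun _ hA => by
    obtain ⟨k, z, -, rfl⟩ := isDyadicSubcube_iff_exists_subcube.1 hA
    exact ⟨(k, z), rfl⟩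

namespace IsDyadicSubcube

lemma subset (hA : A.IsDyadicSubcube Q) : A.toSet ⊆ Q.toSet := by
  obtain ⟨k, z, hz, rfl⟩ := isDyadicSubcube_iff_exists_subcube.1 hA
  have hzero : (fun i => z i / 2 ^ (k - 0)) = 0 := funext fun i => Nat.div_eq_of_lt (hz i)
  simpa only [hzero, subcube_zero] using subcube_subset_subcube_div (Q := Q) (Nat.zero_le k) z

lemma subset_of_side_le (hA : A.IsDyadicSubcube Q) (hB : B.IsDyadicSubcube Q)
    (hxA : x ∈ A.toSet) (hxB : x ∈ B.toSet) (hside : A.side ≤ B.side) : A.toSet ⊆ B.toSet := by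
  obtain ⟨k, z, -, rfl⟩ := isDyadicSubcube_iff_exists_subcube.1 hA
  obtain ⟨j, w, -, rfl⟩ := isDyadicSubcube_iff_exists_subcube.1 hB
  have hjk : j ≤ k := by
    simp only [subcube] at hside
    rwa [div_le_div_iff_of_pos_left Q.side_pos (by positivity) (by positivity),
      pow_le_pow_iff_right₀ one_lt_two] at hside
  have hsub := subcube_subset_subcube_div (Q := Q) hjk z
  rwa [eq_of_mem_subcube (hsub hxA) hxB] at hsub

lemma eq_of_side_eq (hA : A.IsDyadicSubcube Q) (hB : B.IsDyadicSubcube Q)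
    (hxA : x ∈ A.toSet) (hxB : x ∈ B.toSet) (hside : A.side = B.side) : A = B := by
  obtain ⟨k, z, -, rfl⟩ := isDyadicSubcube_iff_exists_subcube.1 hA
  obtain ⟨j, w, -, rfl⟩ := isDyadicSubcube_iff_exists_subcube.1 hB
  have hkj : k = j := by
    simp only [subcube] at hside
    field_simp [Q.side_pos.ne'] at hside
    exact pow_right_injective₀ two_pos (by norm_num) hside.symm
  subst hkj
  rw [eq_of_mem_subcube hxA hxB]

lemma exists_parent (hA : A.IsDyadicSubcube Q) (hne : A ≠ Q) :
    ∃ P : Cube n, P.IsDyadicSubcube Q ∧ P.side = 2 * A.side ∧ A.toSet ⊆ P.toSet := by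
  obtain ⟨k, z, hz, rfl⟩ := isDyadicSubcube_iff_exists_subcube.1 hA
  obtain _ | k := k
  · have hzero : z = 0 := funext fun i => by simpa using hz i
    exact absurd (hzero ▸ Q.subcube_zero) hne
  · have hparent : ∀ i, z i / 2 ^ (k + 1 - k) < 2 ^ k := fun i => by
      have := hz i
      rw [pow_succ] at this
      simpa using Nat.div_lt_of_lt_mul (by omega)
    refine ⟨_, isDyadicSubcube_iff_exists_subcube.2 ⟨k, _, hparent, rfl⟩, ?_,
      subcube_subset_subcube_div k.le_succ z⟩
    simp only [subcube, pow_succ]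
    field_simp

end IsDyadicSubcube

lemma exists_dyadicSubcubes_cover_inter {W : Cube n} (h : W.side ≤ Q.side) :
    ∃ K : (Fin n → Bool) → Cube n, (∀ b, (K b).IsDyadicSubcube Q ∧ (K b).side ≤ 2 * W.side) ∧
      Q.toSet ∩ W.toSet ⊆ ⋃ b, (K b).toSet := by
  obtain ⟨k, hk, hk'⟩ := exists_nat_pow_near ((one_le_div W.side_pos).2 h) one_lt_two
  rw [le_div_iff₀ W.side_pos] at hk
  rw [div_lt_iff₀ W.side_pos, pow_succ] at hk'
  -- Along each axis `W` meets at most two consecutive intervals of generation `k`; the `min` keeps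
  -- the index admissible when the second one lies outside `Q`.
  let z (b : Fin n → Bool) (i : Fin n) : ℕ :=
    min (⌊2 ^ k * Q.coord W.corner i⌋₊ + (b i).toNat) (2 ^ k - 1)
  have hz (b : Fin n → Bool) (i : Fin n) : z b i < 2 ^ k :=
    (min_le_right _ _).trans_lt (Nat.sub_one_lt (by positivity))
  refine ⟨fun b => Q.subcube k (z b),
    fun b => ⟨isDyadicSubcube_iff_exists_subcube.2 ⟨k, z b, hz b, rfl⟩, ?_⟩, ?_⟩
  · change Q.side / 2 ^ k ≤ 2 * W.side
    rw [div_le_iff₀ (by positivity)]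
    linarith
  · rintro x ⟨hxQ, hxW⟩
    have hpow : (0 : ℝ) < 2 ^ k := by positivity
    have hfloor (i : Fin n) : ∃ b : Bool, ⌊2 ^ k * Q.coord x i⌋₊ =
        min (⌊2 ^ k * Q.coord W.corner i⌋₊ + b.toNat) (2 ^ k - 1) := by
      obtain ⟨hx0, hx1⟩ := mem_toSet_iff_coord.1 hxQ i
      apply exists_natFloor_eq_min (by positivity)
      · exact_mod_cast mul_lt_of_lt_one_right hpow hx1
      · exact mul_le_mul_of_nonneg_left
          (div_le_div_of_nonneg_right (sub_le_sub_right (hxW i).1 _) Q.side_pos.le) hpow.le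
      · have : 2 ^ k * (x i - W.corner i) < Q.side :=
          (mul_lt_mul_of_pos_left (by linarith [(hxW i).2]) hpow).trans_le hk
        have : 2 ^ k * Q.coord x i - 2 ^ k * Q.coord W.corner i < 1 := by
          rwa [← mul_sub, coord_sub_coord, mul_div_assoc', div_lt_one Q.side_pos]
        linarith
    choose b hb using hfloor
    refine mem_iUnion.2 ⟨b, mem_subcube_iff_floor.2 fun i => ?_⟩
    obtain ⟨hx0, -⟩ := mem_toSet_iff_coord.1 hxQ i
    rw [← Int.natCast_floor_eq_floor (by positivity), hb i]

end Cube

/-! ### Stopping cubes of a dyadic cover -/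

section Stopping

variable {n : ℕ} {Q A B : Cube n} {x : Fin n → ℝ} {p : Cube n → Prop}

/-- The stopping cubes of `p` in `Q`: the maximal dyadic subcubes of `Q` satisfying `p`, as in a
Calderón–Zygmund decomposition. Maximality is measured by the side length, so that it is meaningful
also for `n = 0`, where all cubes have the same points. -/
def stoppingCubes (Q : Cube n) (p : Cube n → Prop) : Set (Cube n) :=
  {A | A.IsDyadicSubcube Q ∧ p A ∧
    ∀ B : Cube n, B.IsDyadicSubcube Q → p B → A.toSet ⊆ B.toSet → B.side ≤ A.side}

lemma countable_stoppingCubes : (stoppingCubes Q p).Countable :=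
  Q.countable_setOf_isDyadicSubcube.mono fun _ hA => hA.1

lemma eq_of_mem_stoppingCubes (hA : A ∈ stoppingCubes Q p) (hB : B ∈ stoppingCubes Q p)
    (hxA : x ∈ A.toSet) (hxB : x ∈ B.toSet) : A = B := by
  refine hA.1.eq_of_side_eq hB.1 hxA hxB ?_
  rcases le_total A.side B.side with h | h
  · exact h.antisymm (hA.2.2 B hB.1 hB.2.1 (hA.1.subset_of_side_le hB.1 hxA hxB h))
  · exact (hB.2.2 A hA.1 hA.2.1 (hB.1.subset_of_side_le hA.1 hxB hxA h)).antisymm h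

lemma exists_mem_stoppingCubes (hA : A.IsDyadicSubcube Q) (hp : p A) (hx : x ∈ A.toSet) :
    ∃ R ∈ stoppingCubes Q p, x ∈ R.toSet := by
  classical
  have hex : ∃ k, ∃ z : Fin n → ℕ, (∀ i, z i < 2 ^ k) ∧ p (Q.subcube k z) ∧
      x ∈ (Q.subcube k z).toSet := by
    obtain ⟨k, z, hz, rfl⟩ := Cube.isDyadicSubcube_iff_exists_subcube.1 hA
    exact ⟨k, z, hz, hp, hx⟩
  obtain ⟨z, hz, hpz, hxz⟩ := Nat.find_spec hex
  refine ⟨_, ⟨Cube.isDyadicSubcube_iff_exists_subcube.2 ⟨_, z, hz, rfl⟩, hpz, ?_⟩, hxz⟩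
  intro B hB hpB hsub
  obtain ⟨j, w, hw, rfl⟩ := Cube.isDyadicSubcube_iff_exists_subcube.1 hB
  have hmin : Nat.find hex ≤ j := Nat.find_min' hex ⟨w, hw, hpB, hsub hxz⟩
  exact div_le_div_of_nonneg_left Q.side_pos.le (by positivity)
    (pow_le_pow_right₀ one_le_two hmin)

variable {ι : Type*} {μ : OuterMeasure (Fin n → ℝ)} {K : ι → Cube n}

/-- The total `μ`-mass of the members of the family `K` that are contained in the cube `A`. -/
def familyMass (μ : OuterMeasure (Fin n → ℝ)) (K : ι → Cube n) (A : Cube n) : ℝ≥0∞ :=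
  ∑' i : {i // (K i).toSet ⊆ A.toSet}, μ (K i).toSet

/-- A cube is heavy for the family `K` if its `μ`-mass is at most that of the members of `K` it
contains. Replacing these members by a stopping cube of this property does not increase the total
mass. -/
def IsHeavy (μ : OuterMeasure (Fin n → ℝ)) (K : ι → Cube n) (A : Cube n) : Prop :=
  μ A.toSet ≤ familyMass μ K A

lemma isHeavy_apply (i : ι) : IsHeavy μ K (K i) :=
  ENNReal.le_tsum (f := fun j : {j // (K j).toSet ⊆ (K i).toSet} => μ (K j).toSet)
    ⟨i, Subset.rfl⟩

lemma familyMass_le_tsum : familyMass μ K A ≤ ∑' i, μ (K i).toSet :=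
  ENNReal.tsum_comp_le_tsum_of_injective Subtype.val_injective fun i => μ (K i).toSet

lemma iUnion_subset_biUnion_stoppingCubes (hK : ∀ i, (K i).IsDyadicSubcube Q) :
    ⋃ i, (K i).toSet ⊆ ⋃ R ∈ stoppingCubes Q (IsHeavy μ K), R.toSet :=
  iUnion_subset fun i _ hx => by
    simpa using exists_mem_stoppingCubes (hK i) (isHeavy_apply i) hx

lemma tsum_stoppingCubes_le :
    ∑' R : stoppingCubes Q (IsHeavy μ K), μ R.1.toSet ≤ ∑' i, μ (K i).toSet := by
  have hinj : Function.Injective fun c : Σ R : stoppingCubes Q (IsHeavy μ K),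
      {i // (K i).toSet ⊆ R.1.toSet} => c.2.1 := by
    rintro ⟨R, i, hi⟩ ⟨S, j, hj⟩ (rfl : i = j)
    obtain rfl : R = S := Subtype.ext <|
      eq_of_mem_stoppingCubes R.2 S.2 (hi (K i).corner_mem) (hj (K i).corner_mem)
    rfl
  calc ∑' R : stoppingCubes Q (IsHeavy μ K), μ R.1.toSet
      ≤ ∑' R : stoppingCubes Q (IsHeavy μ K), familyMass μ K R.1 :=
        ENNReal.tsum_le_tsum fun R => R.2.2.1
    _ = ∑' c : Σ R : stoppingCubes Q (IsHeavy μ K), {i // (K i).toSet ⊆ R.1.toSet},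
          μ (K c.2.1).toSet :=
        (ENNReal.tsum_sigma fun (R : stoppingCubes Q (IsHeavy μ K))
          (i : {i // (K i).toSet ⊆ R.1.toSet}) => μ (K i).toSet).symm
    _ ≤ ∑' i, μ (K i).toSet :=
        ENNReal.tsum_comp_le_tsum_of_injective hinj fun i => μ (K i).toSet

lemma not_isHeavy_of_mem_stoppingCubes {R P : Cube n} (hR : R ∈ stoppingCubes Q (IsHeavy μ K))
    (hP : P.IsDyadicSubcube Q) (hRP : R.toSet ⊆ P.toSet) (hlt : R.side < P.side) :
    ¬ IsHeavy μ K P :=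
  fun h => hlt.not_ge (hR.2.2 P hP h hRP)

lemma measure_iUnion_inter_lt [Countable ι] (hK : ∀ i, (K i).IsDyadicSubcube Q) {R P : Cube n}
    (hR : R ∈ stoppingCubes Q (IsHeavy μ K)) (hP : P.IsDyadicSubcube Q)
    (hRP : R.toSet ⊆ P.toSet) (hlt : R.side < P.side) :
    μ ((⋃ i, (K i).toSet) ∩ P.toSet) < μ P.toSet := by
  -- A member of the family that meets `P` but is not inside `P` would contain `P`, hence `R`.
  have hsub : (⋃ i, (K i).toSet) ∩ P.toSet ⊆
      ⋃ i : {i // (K i).toSet ⊆ P.toSet}, (K i).toSet := by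
    rintro x ⟨hxK, hxP⟩
    obtain ⟨i, hxi⟩ := mem_iUnion.1 hxK
    refine mem_iUnion.2 ⟨⟨i, (hK i).subset_of_side_le hP hxi hxP ?_⟩, hxi⟩
    by_contra! hgt
    exact not_isHeavy_of_mem_stoppingCubes hR (hK i)
      (hRP.trans (hP.subset_of_side_le (hK i) hxP hxi hgt.le)) (hlt.trans hgt) (isHeavy_apply i)
  calc μ ((⋃ i, (K i).toSet) ∩ P.toSet)
      ≤ familyMass μ K P := (measure_mono hsub).trans (measure_iUnion_le _)
    _ < μ P.toSet := not_le.1 (not_isHeavy_of_mem_stoppingCubes hR hP hRP hlt)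

theorem exists_parent_measure_inter_lt [Countable ι] (hK : ∀ i, (K i).IsDyadicSubcube Q)
    (hsum : ∑' i, μ (K i).toSet < μ Q.toSet) {R : Cube n}
    (hR : R ∈ stoppingCubes Q (IsHeavy μ K)) :
    ∃ P : Cube n, P.side = 2 * R.side ∧ R.toSet ⊆ P.toSet ∧ P.toSet ⊆ Q.toSet ∧
      μ ((⋃ i, (K i).toSet) ∩ P.toSet) < μ P.toSet := by
  have hRQ : R ≠ Q := by
    rintro rfl
    exact (hR.2.1.trans familyMass_le_tsum).not_gt hsum
  obtain ⟨P, hP, hside, hRP⟩ := hR.1.exists_parent hRQ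
  exact ⟨P, hside, hRP, hP.subset,
    measure_iUnion_inter_lt hK hR hP hRP (by linarith [R.side_pos])⟩

end Stopping

/-! ### Hausdorff content -/

section HausdorffContent

variable {n : ℕ} {δ : ℝ} {E F : Set (Fin n → ℝ)}

lemma hContent_mono (h : E ⊆ F) : hContent n δ E ≤ hContent n δ F :=
  le_iInf₂ fun W hW => iInf₂_le W (h.trans hW)

lemma exists_cover_of_hContent_lt {r : ℝ≥0∞} (h : hContent n δ E < r) :
    ∃ W : ℕ → Cube n, E ⊆ ⋃ i, (W i).toSet ∧ ∑' i, ENNReal.ofReal ((W i).side ^ δ) < r := by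
  simpa only [hContent, iInf_lt_iff, exists_prop] using h

lemma exists_tsum_side_rpow_lt (n : ℕ) (hδ : 0 < δ) {ε : ℝ≥0∞} (hε : ε ≠ 0) :
    ∃ W : ℕ → Cube n, ∑' i, ENNReal.ofReal ((W i).side ^ δ) < ε := by
  obtain ⟨η, hη, hsum⟩ := ENNReal.exists_pos_sum_of_countable hε ℕ
  refine ⟨fun i => ⟨0, (η i : ℝ) ^ δ⁻¹, Real.rpow_pos_of_pos (hη i) _⟩, ?_⟩
  simpa only [Real.rpow_inv_rpow NNReal.zero_le_coe hδ.ne', ENNReal.ofReal_coe_nnreal] using hsum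

lemma hContent_le_tsum (hδ : 0 < δ) {ι : Type*} [Countable ι] (W : ι → Cube n)
    (hE : E ⊆ ⋃ i, (W i).toSet) :
    hContent n δ E ≤ ∑' i, ENNReal.ofReal ((W i).side ^ δ) := by
  refine ENNReal.le_of_forall_pos_le_add fun ε hε _ => ?_
  obtain ⟨V, hV⟩ := exists_tsum_side_rpow_lt n hδ (ENNReal.coe_ne_zero.2 hε.ne')
  -- The definition only allows covers indexed by `ℕ`: pad with cubes of small total content.
  obtain ⟨_⟩ := nonempty_denumerable (ι ⊕ ℕ)
  let e : ℕ ≃ ι ⊕ ℕ := (Denumerable.eqv (ι ⊕ ℕ)).symm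
  have hcover : E ⊆ ⋃ m, (Sum.elim W V (e m)).toSet := fun x hx => by
    obtain ⟨i, hi⟩ := mem_iUnion.1 (hE hx)
    exact mem_iUnion.2 ⟨e.symm (Sum.inl i), by simpa using hi⟩
  calc hContent n δ E
      ≤ ∑' m, ENNReal.ofReal ((Sum.elim W V (e m)).side ^ δ) :=
        iInf₂_le (fun m => Sum.elim W V (e m)) hcover
    _ = ∑' i : ι ⊕ ℕ, ENNReal.ofReal ((Sum.elim W V i).side ^ δ) :=
        e.tsum_eq fun i => ENNReal.ofReal ((Sum.elim W V i).side ^ δ)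
    _ = ∑' i, ENNReal.ofReal ((W i).side ^ δ) + ∑' j, ENNReal.ofReal ((V j).side ^ δ) :=
        ENNReal.summable.tsum_sum ENNReal.summable
    _ ≤ ∑' i, ENNReal.ofReal ((W i).side ^ δ) + ε := by gcongr

lemma hContent_iUnion_le (hδ : 0 < δ) (E : ℕ → Set (Fin n → ℝ)) :
    hContent n δ (⋃ i, E i) ≤ ∑' i, hContent n δ (E i) := by
  refine ENNReal.le_of_forall_pos_le_add fun ε hε hfin => ?_
  obtain ⟨η, hη, hsum⟩ := ENNReal.exists_pos_sum_of_countable (ENNReal.coe_ne_zero.2 hε.ne') ℕ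
  have hlt (i : ℕ) : hContent n δ (E i) < hContent n δ (E i) + η i :=
    ENNReal.lt_add_right (ne_top_of_le_ne_top hfin.ne (ENNReal.le_tsum i))
      (ENNReal.coe_ne_zero.2 (hη i).ne')
  choose W hW hWsum using fun i => exists_cover_of_hContent_lt (hlt i)
  have hcover : ⋃ i, E i ⊆ ⋃ c : ℕ × ℕ, (W c.1 c.2).toSet :=
    iUnion_subset fun i x hx => by
      obtain ⟨j, hj⟩ := mem_iUnion.1 (hW i hx)
      exact mem_iUnion.2 ⟨(i, j), hj⟩
  calc hContent n δ (⋃ i, E i)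
      ≤ ∑' c : ℕ × ℕ, ENNReal.ofReal ((W c.1 c.2).side ^ δ) := hContent_le_tsum hδ _ hcover
    _ = ∑' i, ∑' j, ENNReal.ofReal ((W i j).side ^ δ) :=
        ENNReal.tsum_prod (f := fun i j => ENNReal.ofReal ((W i j).side ^ δ))
    _ ≤ ∑' i, (hContent n δ (E i) + η i) := ENNReal.tsum_le_tsum fun i => (hWsum i).le
    _ = ∑' i, hContent n δ (E i) + ∑' i, (η i : ℝ≥0∞) := ENNReal.tsum_add
    _ ≤ ∑' i, hContent n δ (E i) + ε := by gcongr

/-- The Hausdorff content as an outer measure, which gives access to the library on outer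
measures. -/
def hContentOuterMeasure (n : ℕ) (hδ : 0 < δ) : OuterMeasure (Fin n → ℝ) where
  measureOf := hContent n δ
  empty := by simpa using hContent_le_tsum hδ (E := ∅) (Empty.elim : Empty → Cube n)
  mono := hContent_mono
  iUnion_nat E _ := hContent_iUnion_le hδ E

lemma Cube.volume_toSet (Q : Cube n) : volume Q.toSet = ENNReal.ofReal (Q.side ^ (n : ℝ)) := by
  have hpi : Q.toSet = univ.pi fun i => Ico (Q.corner i) (Q.corner i + Q.side) := by
    ext x
    simp [Cube.toSet]
  rw [hpi, Real.volume_pi_Ico]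
  simp [ENNReal.ofReal_pow Q.side_pos.le]

lemma Cube.side_le_of_rpow_le (hδ : 0 < δ) {A B : Cube n}
    (h : ENNReal.ofReal (A.side ^ δ) ≤ ENNReal.ofReal (B.side ^ δ)) : A.side ≤ B.side := by
  rwa [ENNReal.ofReal_le_ofReal_iff (Real.rpow_nonneg B.side_pos.le δ),
    Real.rpow_le_rpow_iff A.side_pos.le B.side_pos.le hδ] at h

-- The lower bound compares with Lebesgue measure: a cover cheaper than `Q` consists of cubes of
-- side `s ≤ ℓ(Q)`, and then `s ^ n ≤ ℓ(Q) ^ (n - δ) * s ^ δ`.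
lemma hContent_toSet (hδ : 0 < δ) (hδn : δ ≤ n) (Q : Cube n) :
    hContent n δ Q.toSet = ENNReal.ofReal (Q.side ^ δ) := by
  refine le_antisymm ?_ (not_lt.1 fun hlt => ?_)
  · simpa using hContent_le_tsum hδ (fun _ : Unit => Q) (subset_iUnion_of_subset () Subset.rfl)
  obtain ⟨W, hW, hWsum⟩ := exists_cover_of_hContent_lt hlt
  have hside (i : ℕ) : (W i).side ≤ Q.side :=
    Cube.side_le_of_rpow_le hδ ((ENNReal.le_tsum i).trans hWsum.le)
  have hsplit (A : Cube n) : ENNReal.ofReal (A.side ^ (n : ℝ)) =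
      ENNReal.ofReal (A.side ^ (n - δ)) * ENNReal.ofReal (A.side ^ δ) := by
    rw [← ENNReal.ofReal_mul (Real.rpow_nonneg A.side_pos.le _), ← Real.rpow_add A.side_pos,
      sub_add_cancel]
  have hpos : ENNReal.ofReal (Q.side ^ (n - δ)) ≠ 0 :=
    (ENNReal.ofReal_pos.2 (Real.rpow_pos_of_pos Q.side_pos _)).ne'
  refine lt_irrefl (volume Q.toSet) ?_
  calc volume Q.toSet
      ≤ ∑' i, volume (W i).toSet := (measure_mono hW).trans (measure_iUnion_le _)
    _ ≤ ∑' i, ENNReal.ofReal (Q.side ^ (n - δ)) * ENNReal.ofReal ((W i).side ^ δ) := by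
        refine ENNReal.tsum_le_tsum fun i => ?_
        rw [Cube.volume_toSet, hsplit]
        gcongr
        · exact (W i).side_pos.le
        · exact hside i
    _ = ENNReal.ofReal (Q.side ^ (n - δ)) * ∑' i, ENNReal.ofReal ((W i).side ^ δ) :=
        ENNReal.tsum_mul_left
    _ < ENNReal.ofReal (Q.side ^ (n - δ)) * ENNReal.ofReal (Q.side ^ δ) :=
        (ENNReal.mul_lt_mul_iff_right hpos ENNReal.ofReal_ne_top).2 hWsum
    _ = volume Q.toSet := by rw [Cube.volume_toSet, hsplit]

lemma hContent_union_le (hδ : 0 < δ) (E F : Set (Fin n → ℝ)) :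
    hContent n δ (E ∪ F) ≤ hContent n δ E + hContent n δ F :=
  measure_union_le (μ := hContentOuterMeasure n hδ) E F

lemma hContent_biUnion_le (hδ : 0 < δ) {ι : Type*} {I : Set ι} (hI : I.Countable)
    (E : ι → Set (Fin n → ℝ)) : hContent n δ (⋃ i ∈ I, E i) ≤ ∑' i : I, hContent n δ (E i) :=
  measure_biUnion_le (hContentOuterMeasure n hδ) hI E

lemma hContent_toSet_ne_zero (hδ : 0 < δ) (hδn : δ ≤ n) (Q : Cube n) :
    hContent n δ Q.toSet ≠ 0 := by
  rw [hContent_toSet hδ hδn]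
  exact (ENNReal.ofReal_pos.2 (Real.rpow_pos_of_pos Q.side_pos δ)).ne'

lemma hContent_toSet_ne_top (hδ : 0 < δ) (hδn : δ ≤ n) (Q : Cube n) :
    hContent n δ Q.toSet ≠ ⊤ := by
  rw [hContent_toSet hδ hδn]
  exact ENNReal.ofReal_ne_top

lemma Cube.ofReal_rpow_side_le {A B : Cube n} {r : NNReal} (hδ : 0 ≤ δ) (h : A.side ≤ r * B.side) :
    ENNReal.ofReal (A.side ^ δ) ≤ r ^ δ * ENNReal.ofReal (B.side ^ δ) := by
  rw [← ENNReal.ofReal_rpow_of_pos A.side_pos, ← ENNReal.ofReal_rpow_of_pos B.side_pos,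
    ← ENNReal.mul_rpow_of_nonneg _ _ hδ, ← ENNReal.ofReal_coe_nnreal,
    ← ENNReal.ofReal_mul r.coe_nonneg]
  exact ENNReal.rpow_le_rpow (ENNReal.ofReal_le_ofReal h) hδ

theorem exists_dyadicSubcubes_cover (hδ : 0 < δ) (hδn : δ ≤ n) {Q : Cube n} (hE : E ⊆ Q.toSet)
    {r : ℝ≥0∞} (hr : r ≤ hContent n δ Q.toSet) (hEr : 2 ^ n * 2 ^ δ * hContent n δ E < r) :
    ∃ K : ℕ × (Fin n → Bool) → Cube n, (∀ i, (K i).IsDyadicSubcube Q) ∧ E ⊆ ⋃ i, (K i).toSet ∧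
      ∑' i, hContent n δ (K i).toSet < r := by
  have hC : (2 : ℝ≥0∞) ^ n * 2 ^ δ ≠ ⊤ := by finiteness
  have hC₁ : 1 ≤ (2 : ℝ≥0∞) ^ n * 2 ^ δ :=
    one_le_mul (one_le_pow₀ one_le_two) (ENNReal.one_le_rpow one_le_two hδ)
  rw [mul_comm, ← ENNReal.lt_div_iff_mul_lt (.inl (one_pos.trans_le hC₁).ne') (.inl hC)] at hEr
  obtain ⟨W, hW, hWsum⟩ := exists_cover_of_hContent_lt hEr
  have hside (m : ℕ) : (W m).side ≤ Q.side := by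
    refine Cube.side_le_of_rpow_le hδ ?_
    rw [← hContent_toSet hδ hδn Q]
    calc ENNReal.ofReal ((W m).side ^ δ) ≤ ∑' i, ENNReal.ofReal ((W i).side ^ δ) :=
          ENNReal.le_tsum m
      _ ≤ r / (2 ^ n * 2 ^ δ) := hWsum.le
      _ ≤ r := ENNReal.div_le_of_le_mul (le_mul_of_one_le_right' hC₁)
      _ ≤ hContent n δ Q.toSet := hr
  choose K hK hKcover using fun m => Cube.exists_dyadicSubcubes_cover_inter (hside m)
  refine ⟨fun c => K c.1 c.2, fun c => (hK c.1 c.2).1, fun x hx => ?_, ?_⟩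
  · obtain ⟨m, hm⟩ := mem_iUnion.1 (hW hx)
    obtain ⟨b, hb⟩ := mem_iUnion.1 (hKcover m ⟨hE hx, hm⟩)
    exact mem_iUnion.2 ⟨(m, b), hb⟩
  have hKsum (m : ℕ) : ∑' b, hContent n δ (K m b).toSet ≤
      2 ^ n * 2 ^ δ * ENNReal.ofReal ((W m).side ^ δ) := by
    rw [tsum_fintype, mul_assoc]
    refine (Finset.sum_le_card_nsmul _ _ (2 ^ δ * ENNReal.ofReal ((W m).side ^ δ))
      fun b _ => ?_).trans_eq (by simp)
    rw [hContent_toSet hδ hδn]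
    exact Cube.ofReal_rpow_side_le (r := 2) hδ.le (hK m b).2
  calc ∑' c : ℕ × (Fin n → Bool), hContent n δ (K c.1 c.2).toSet
      = ∑' m, ∑' b, hContent n δ (K m b).toSet :=
        ENNReal.tsum_prod (f := fun m b => hContent n δ (K m b).toSet)
    _ ≤ ∑' m, 2 ^ n * 2 ^ δ * ENNReal.ofReal ((W m).side ^ δ) := ENNReal.tsum_le_tsum hKsum
    _ = (∑' m, ENNReal.ofReal ((W m).side ^ δ)) * (2 ^ n * 2 ^ δ) := by
        rw [ENNReal.tsum_mul_left, mul_comm]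
    _ < r := ENNReal.mul_lt_of_lt_div hWsum

end HausdorffContent

/-! ### Functions of bounded lower oscillation -/

section BLO

variable {n : ℕ} {δ b : ℝ} {f : (Fin n → ℝ) → ℝ} {Q : Cube n}

lemma mul_hContent_lt_le_integH (n : ℕ) (δ : ℝ) (g : (Fin n → ℝ) → ℝ) (E : Set (Fin n → ℝ))
    (t : ℝ) : ENNReal.ofReal t * hContent n δ {x | x ∈ E ∧ t < g x} ≤ integH n δ g E :=
  calc ENNReal.ofReal t * hContent n δ {x | x ∈ E ∧ t < g x}
      = ∫⁻ _ in Ioc (0 : ℝ) t, hContent n δ {x | x ∈ E ∧ t < g x} := by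
        rw [setLIntegral_const, Real.volume_Ioc, sub_zero, mul_comm]
    _ ≤ ∫⁻ s in Ioc (0 : ℝ) t, hContent n δ {x | x ∈ E ∧ s < g x} :=
        setLIntegral_mono' measurableSet_Ioc fun _ hs =>
          hContent_mono fun _ hx => ⟨hx.1, hs.2.trans_lt hx.2⟩
    _ ≤ integH n δ g E := lintegral_mono_set Ioc_subset_Ioi_self

lemma integH_oscillation_le (hδ : 0 < δ) (hδn : δ ≤ n) (f : (Fin n → ℝ) → ℝ) (Q : Cube n) :
    integH n δ (fun x => |f x - essInfQ n δ f Q|) Q.toSet ≤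
      bloNorm n δ f * hContent n δ Q.toSet :=
  (ENNReal.div_le_iff (hContent_toSet_ne_zero hδ hδn Q) (hContent_toSet_ne_top hδ hδn Q)).1 <|
    le_iSup (fun R : Cube n =>
      integH n δ (fun x => |f x - essInfQ n δ f R|) R.toSet / hContent n δ R.toSet) Q

lemma mul_hContent_oscillation_le (hδ : 0 < δ) (hδn : δ ≤ n) (hb : 0 < b)
    (hf : bloNorm n δ f ≤ ENNReal.ofReal b) (Q : Cube n) (s : ℝ) :
    ENNReal.ofReal s * hContent n δ {x | x ∈ Q.toSet ∧ s * b < f x - essInfQ n δ f Q} ≤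
      hContent n δ Q.toSet := by
  rw [← ENNReal.mul_le_mul_iff_right (ENNReal.ofReal_pos.2 hb).ne' ENNReal.ofReal_ne_top,
    ← mul_assoc, mul_comm (ENNReal.ofReal b), ← ENNReal.ofReal_mul' hb.le]
  calc ENNReal.ofReal (s * b) * hContent n δ {x | x ∈ Q.toSet ∧ s * b < f x - essInfQ n δ f Q}
      ≤ ENNReal.ofReal (s * b) *
          hContent n δ {x | x ∈ Q.toSet ∧ s * b < |f x - essInfQ n δ f Q|} := by
        gcongr
        exact hContent_mono fun x hx => ⟨hx.1, hx.2.trans_le (le_abs_self _)⟩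
    _ ≤ integH n δ (fun x => |f x - essInfQ n δ f Q|) Q.toSet := mul_hContent_lt_le_integH ..
    _ ≤ bloNorm n δ f * hContent n δ Q.toSet := integH_oscillation_le hδ hδn f Q
    _ ≤ ENNReal.ofReal b * hContent n δ Q.toSet := by gcongr

lemma essInfQ_nonneg (n : ℕ) (δ : ℝ) (f : (Fin n → ℝ) → ℝ) (Q : Cube n) : 0 ≤ essInfQ n δ f Q :=
  Real.sInf_nonneg fun _ ht => ht.1.le

lemma essInfQ_le_of_hContent_lt (hδ : 0 < δ) {a : ℝ} (ha : 0 ≤ a)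
    (h : hContent n δ {x | x ∈ Q.toSet ∧ a < f x} < hContent n δ Q.toSet) :
    essInfQ n δ f Q ≤ a := by
  refine le_of_forall_pos_le_add fun ε hε =>
    csInf_le ⟨0, fun _ ht => ht.1.le⟩ ⟨by positivity, pos_iff_ne_zero.2 fun hzero => h.not_ge ?_⟩
  have hcover : Q.toSet ⊆ {x | x ∈ Q.toSet ∧ a < f x} ∪ {x | x ∈ Q.toSet ∧ f x < a + ε} :=
    fun x hx => (lt_or_ge a (f x)).imp (⟨hx, ·⟩) fun hle => ⟨hx, by linarith⟩
  simpa only [hzero, add_zero] using (hContent_mono hcover).trans (hContent_union_le hδ _ _)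

/-- The multiple of the BLO seminorm at which the John–Nirenberg iteration cuts the oscillation.
By Chebyshev's inequality the part of `Q` above it has content at most a quarter of
`ℋ^δ_∞(Q) / (2 ^ n * 2 ^ δ)`, where `2 ^ n * 2 ^ δ` is the loss in passing to dyadic covers. -/
def oscThreshold (n : ℕ) (δ : ℝ) : ℝ := 4 * (2 ^ n * 2 ^ δ)

lemma oscThreshold_pos (n : ℕ) (δ : ℝ) : 0 < oscThreshold n δ := by
  unfold oscThreshold
  positivity

lemma ofReal_oscThreshold (n : ℕ) (δ : ℝ) :
    ENNReal.ofReal (oscThreshold n δ) = 4 * (2 ^ n * 2 ^ δ) := by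
  simp [oscThreshold, ENNReal.ofReal_mul, ENNReal.ofReal_pow, ← ENNReal.ofReal_rpow_of_pos]

lemma four_mul_hContent_oscillation_le (hδ : 0 < δ) (hδn : δ ≤ n) (hb : 0 < b)
    (hf : bloNorm n δ f ≤ ENNReal.ofReal b) (Q : Cube n) :
    4 * (2 ^ n * 2 ^ δ) *
        hContent n δ {x | x ∈ Q.toSet ∧ oscThreshold n δ * b < f x - essInfQ n δ f Q} ≤
      hContent n δ Q.toSet := by
  rw [← ofReal_oscThreshold]
  exact mul_hContent_oscillation_le hδ hδn hb hf Q _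

lemma two_pow_mul_hContent_oscillation_lt (hδ : 0 < δ) (hδn : δ ≤ n) (hb : 0 < b)
    (hf : bloNorm n δ f ≤ ENNReal.ofReal b) (Q : Cube n) :
    2 ^ n * 2 ^ δ *
        hContent n δ {x | x ∈ Q.toSet ∧ oscThreshold n δ * b < f x - essInfQ n δ f Q} <
      hContent n δ Q.toSet / 2 := by
  have h0 := hContent_toSet_ne_zero hδ hδn Q
  have htop := hContent_toSet_ne_top hδ hδn Q
  refine lt_of_le_of_lt ?_ (ENNReal.half_lt_self (ENNReal.half_pos h0).ne'
    (ENNReal.div_ne_top htop two_ne_zero))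
  rw [ENNReal.le_div_iff_mul_le (by simp) (by simp), ENNReal.le_div_iff_mul_le (by simp) (by simp)]
  calc _ = 4 * (2 ^ n * 2 ^ δ) *
        hContent n δ {x | x ∈ Q.toSet ∧ oscThreshold n δ * b < f x - essInfQ n δ f Q} := by ring
    _ ≤ hContent n δ Q.toSet := four_mul_hContent_oscillation_le hδ hδn hb hf Q

lemma essInfQ_le_add_of_subset (hδ : 0 < δ) (hδn : δ ≤ n) (hb : 0 < b)
    (hf : bloNorm n δ f ≤ ENNReal.ofReal b) {P R : Cube n} (hside : P.side = 2 * R.side)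
    (hRP : R.toSet ⊆ P.toSet) :
    essInfQ n δ f R ≤ essInfQ n δ f P + oscThreshold n δ * b := by
  have hthr := oscThreshold_pos n δ
  have hess := essInfQ_nonneg n δ f P
  refine essInfQ_le_of_hContent_lt hδ (by positivity) ?_
  set G := {x | x ∈ R.toSet ∧ essInfQ n δ f P + oscThreshold n δ * b < f x}
  have hP : hContent n δ P.toSet ≤ 2 ^ δ * hContent n δ R.toSet := by
    rw [hContent_toSet hδ hδn, hContent_toSet hδ hδn]
    exact Cube.ofReal_rpow_side_le (r := 2) hδ.le hside.le
  have hG : 2 ^ δ * (hContent n δ G * 2) ≤ 2 ^ δ * hContent n δ R.toSet :=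
    calc 2 ^ δ * (hContent n δ G * 2)
        = 2 * (1 * 2 ^ δ) * hContent n δ G := by ring
      _ ≤ 4 * (2 ^ n * 2 ^ δ) * hContent n δ G := by
          gcongr
          · norm_num
          · exact one_le_pow₀ one_le_two
      _ ≤ 4 * (2 ^ n * 2 ^ δ) * hContent n δ
            {x | x ∈ P.toSet ∧ oscThreshold n δ * b < f x - essInfQ n δ f P} := by
          gcongr
          exact hContent_mono fun x hx => ⟨hRP hx.1, lt_sub_iff_add_lt'.2 hx.2⟩
      _ ≤ hContent n δ P.toSet := four_mul_hContent_oscillation_le hδ hδn hb hf P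
      _ ≤ 2 ^ δ * hContent n δ R.toSet := hP
  rw [ENNReal.mul_le_mul_iff_right (by simp) (by finiteness),
    ← ENNReal.le_div_iff_mul_le (by simp) (by simp)] at hG
  exact hG.trans_lt (ENNReal.half_lt_self (hContent_toSet_ne_zero hδ hδn R)
    (hContent_toSet_ne_top hδ hδn R))

lemma exists_cover_oscillation (hδ : 0 < δ) (hδn : δ ≤ n) (hb : 0 < b)
    (hf : bloNorm n δ f ≤ ENNReal.ofReal b) (Q : Cube n) :
    ∃ 𝓡 : Set (Cube n), 𝓡.Countable ∧
      {x | x ∈ Q.toSet ∧ oscThreshold n δ * b < f x - essInfQ n δ f Q} ⊆ ⋃ R ∈ 𝓡, R.toSet ∧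
      ∑' R : 𝓡, hContent n δ R.1.toSet ≤ hContent n δ Q.toSet / 2 ∧
      ∀ R ∈ 𝓡, essInfQ n δ f R ≤ essInfQ n δ f Q + 2 * oscThreshold n δ * b := by
  obtain ⟨K, hK, hKcover, hKsum⟩ := exists_dyadicSubcubes_cover hδ hδn (fun _ hx => hx.1)
    ENNReal.half_le_self (two_pow_mul_hContent_oscillation_lt hδ hδn hb hf Q)
  let μ := hContentOuterMeasure n hδ
  refine ⟨stoppingCubes Q (IsHeavy μ K), countable_stoppingCubes,
    hKcover.trans (iUnion_subset_biUnion_stoppingCubes hK), tsum_stoppingCubes_le.trans hKsum.le,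
    fun R hR => ?_⟩
  obtain ⟨P, hside, hRP, hPQ, hlt⟩ := exists_parent_measure_inter_lt hK
    (hKsum.trans_le ENNReal.half_le_self) hR
  have hP : essInfQ n δ f P ≤ essInfQ n δ f Q + oscThreshold n δ * b := by
    have hthr := oscThreshold_pos n δ
    have hess := essInfQ_nonneg n δ f Q
    refine essInfQ_le_of_hContent_lt hδ (by positivity) (lt_of_le_of_lt (hContent_mono ?_) hlt)
    exact fun x hx => ⟨hKcover ⟨hPQ hx.1, lt_sub_iff_add_lt'.2 hx.2⟩, hx.1⟩
  linarith [essInfQ_le_add_of_subset hδ hδn hb hf hside hRP]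

theorem hContent_oscillation_le_pow_mul (hδ : 0 < δ) (hδn : δ ≤ n) (hb : 0 < b)
    (hf : bloNorm n δ f ≤ ENNReal.ofReal b) (j : ℕ) (Q : Cube n) :
    hContent n δ {x | x ∈ Q.toSet ∧ j * (2 * oscThreshold n δ * b) < f x - essInfQ n δ f Q} ≤
      2⁻¹ ^ j * hContent n δ Q.toSet := by
  induction j generalizing Q with
  | zero => simpa using hContent_mono fun x hx => hx.1
  | succ j ih =>
    obtain ⟨𝓡, hcount, hcover, hsum, hess⟩ := exists_cover_oscillation hδ hδn hb hf Q
    have hsub : {x | x ∈ Q.toSet ∧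
          (j + 1 : ℕ) * (2 * oscThreshold n δ * b) < f x - essInfQ n δ f Q} ⊆
        ⋃ R ∈ 𝓡, {x | x ∈ R.toSet ∧
          j * (2 * oscThreshold n δ * b) < f x - essInfQ n δ f R} := by
      rintro x ⟨hxQ, hx⟩
      have hthr : 0 < oscThreshold n δ * b := mul_pos (oscThreshold_pos n δ) hb
      push_cast at hx
      obtain ⟨R, hR, hxR⟩ := mem_iUnion₂.1 (hcover ⟨hxQ, by nlinarith [j.cast_nonneg (α := ℝ)]⟩)
      exact mem_iUnion₂.2 ⟨R, hR, hxR, by linarith [hess R hR]⟩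
    calc hContent n δ {x | x ∈ Q.toSet ∧
          (j + 1 : ℕ) * (2 * oscThreshold n δ * b) < f x - essInfQ n δ f Q}
        ≤ ∑' R : 𝓡, hContent n δ {x | x ∈ R.1.toSet ∧
            j * (2 * oscThreshold n δ * b) < f x - essInfQ n δ f R} :=
          (hContent_mono hsub).trans (hContent_biUnion_le hδ hcount _)
      _ ≤ ∑' R : 𝓡, 2⁻¹ ^ j * hContent n δ R.1.toSet := ENNReal.tsum_le_tsum fun R => ih R
      _ = 2⁻¹ ^ j * ∑' R : 𝓡, hContent n δ R.1.toSet := ENNReal.tsum_mul_left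
      _ ≤ 2⁻¹ ^ j * (hContent n δ Q.toSet / 2) := by gcongr
      _ = 2⁻¹ ^ (j + 1) * hContent n δ Q.toSet := by
          rw [pow_succ, div_eq_mul_inv]
          ring

end BLO

lemma inv_two_pow_floor_le (u : ℝ) : (2⁻¹ : ℝ) ^ ⌊u⌋₊ ≤ 2 * Real.exp (-(Real.log 2 * u)) := by
  have hlog : 0 < Real.log 2 := Real.log_pos one_lt_two
  have hpow : (2⁻¹ : ℝ) ^ ⌊u⌋₊ = Real.exp (-(Real.log 2 * ⌊u⌋₊)) := by
    rw [mul_comm, ← mul_neg, Real.exp_nat_mul, Real.exp_neg, Real.exp_log two_pos]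
  calc (2⁻¹ : ℝ) ^ ⌊u⌋₊ = Real.exp (-(Real.log 2 * ⌊u⌋₊)) := hpow
    _ ≤ Real.exp (Real.log 2 + -(Real.log 2 * u)) :=
        Real.exp_le_exp.2 (by nlinarith [Nat.lt_floor_add_one u])
    _ = 2 * Real.exp (-(Real.log 2 * u)) := by rw [Real.exp_add, Real.exp_log two_pos]

theorem stmt11_general {n : ℕ} {δ b : ℝ} (hδ : 0 < δ) (hδn : δ ≤ n) {f : (Fin n → ℝ) → ℝ}
    (hb : 0 < b) (hf : bloNorm n δ f ≤ ENNReal.ofReal b) (Q : Cube n) {t : ℝ} (ht : 0 ≤ t) :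
    hContent n δ {x | x ∈ Q.toSet ∧ t < f x - essInfQ n δ f Q} ≤
      ENNReal.ofReal 2 * hContent n δ Q.toSet *
        ENNReal.ofReal (Real.exp (-(Real.log 2 / (2 * oscThreshold n δ) * t) / b)) := by
  have hT : 0 < 2 * oscThreshold n δ * b := by have := oscThreshold_pos n δ; positivity
  set u := t / (2 * oscThreshold n δ * b) with hu
  have hfloor : ⌊u⌋₊ * (2 * oscThreshold n δ * b) ≤ t :=
    (le_div_iff₀ hT).1 (Nat.floor_le (by positivity))
  have hexp : -(Real.log 2 / (2 * oscThreshold n δ) * t) / b = -(Real.log 2 * u) := by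
    rw [hu]
    field_simp
  calc hContent n δ {x | x ∈ Q.toSet ∧ t < f x - essInfQ n δ f Q}
      ≤ hContent n δ {x | x ∈ Q.toSet ∧
          ⌊u⌋₊ * (2 * oscThreshold n δ * b) < f x - essInfQ n δ f Q} :=
        hContent_mono fun x hx => ⟨hx.1, hfloor.trans_lt hx.2⟩
    _ ≤ 2⁻¹ ^ ⌊u⌋₊ * hContent n δ Q.toSet := hContent_oscillation_le_pow_mul hδ hδn hb hf _ Q
    _ = ENNReal.ofReal (2⁻¹ ^ ⌊u⌋₊) * hContent n δ Q.toSet := by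
        rw [ENNReal.ofReal_pow (by positivity), ENNReal.ofReal_inv_of_pos two_pos,
          ENNReal.ofReal_ofNat]
    _ ≤ ENNReal.ofReal (2 * Real.exp (-(Real.log 2 * u))) * hContent n δ Q.toSet := by
        gcongr
        exact inv_two_pow_floor_le u
    _ = ENNReal.ofReal 2 * hContent n δ Q.toSet *
          ENNReal.ofReal (Real.exp (-(Real.log 2 / (2 * oscThreshold n δ) * t) / b)) := by
        rw [hexp, ENNReal.ofReal_mul zero_le_two, mul_right_comm]

/-- John–Nirenberg inequality for BLO(ℝⁿ, ℋ^δ_∞). -/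
theorem stmt11 (n : ℕ) (hn : 1 ≤ n) (δ : ℝ) (hδ0 : 0 < δ) (hδn : δ ≤ n) :
    ∃ c C : ℝ, 0 < c ∧ 0 < C ∧
      ∀ f : (Fin n → ℝ) → ℝ, MemBLO n δ f → bloNorm n δ f ≠ 0 →
        ∀ Q : Cube n, ∀ t : ℝ, 0 < t →
          hContent n δ {x | x ∈ Q.toSet ∧ t < f x - essInfQ n δ f Q} ≤
            ENNReal.ofReal C * hContent n δ Q.toSet *
              ENNReal.ofReal (Real.exp (-(c * t) / (bloNorm n δ f).toReal)) :=
  ⟨Real.log 2 / (2 * oscThreshold n δ), 2,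
    div_pos (Real.log_pos one_lt_two) (mul_pos two_pos (oscThreshold_pos n δ)), two_pos,
    fun _ hf hf0 Q _ ht => stmt11_general hδ0 hδn (ENNReal.toReal_pos hf0 hf.2.ne)
      (ENNReal.ofReal_toReal hf.2.ne).ge Q ht.le⟩
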